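/- arXiv:2603.19540 — 2 statements merged into one kernel-verified Lean document; each statement's English description precedes it below -/
import Mathlib

section
/- Let n ≥ 1, let X ⊆ ℝⁿ be nonempty with closure X̄, write δ(x) := dist(x, X̄), and let d > 0, c₃ > 1, c₄ > 0. Suppose ρ : ℝⁿ → [0, ∞) is continuous, vanishes on X̄, is smooth on the complement of X̄, and satisfies c₃⁻¹ δ(x) ≤ ρ(x) ≤ c₃ δ(x) for all x, and |∇ρ(x)| ≤ c₃ and |∇²ρ(x)| ≤ c₃ δ(x)⁻¹ for all x ∉ X̄. Suppose η ∈ C²(ℝ) satisfies 0 ≤ η ≤ 1, η(t) = 0 for t ≤ 1/(2c₃), η(t) = 1 for t ≥ 1/c₃, and |η'| ≤ c₄, |η''| ≤ c₄. Then the function ξ(x) := η(ρ(x)/d) is C² on all of ℝⁿ, satisfies 0 ≤ ξ ≤ 1, ξ = 0 on X̄, ξ(x) = 1 whenever δ(x) ≥ d, the support of ∇ξ is contained in {x : d/(2c₃²) ≤ δ(x) ≤ d}, and for every x ∈ ℝⁿ one has |∇ξ(x)| ≤ c₃ c₄ / d and |∇²ξ(x)| ≤ 3 c₃³ c₄ /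 d². -/
/-!
The function `ξ = η(ρ/d)` vanishes near every point with `δ(x) < d/(2c₃²)`, because there
`ρ ≤ c₃ δ < d/(2c₃)`, and it equals `1` near every point with `δ(x) > d`, because there
`ρ ≥ δ/c₃ > d/c₃`. Every other point lies off `closure X`, where `ρ` is smooth, so `ξ` is `C²`
and the derivative of `ξ` is supported in the shell. Off `closure X` the chain rule gives

* `∇ξ = (η'(ρ/d)/d) ∇ρ`, hence `|∇ξ| ≤ c₃c₄/d`;
* `∇²ξ = (η'(ρ/d)/d) ∇²ρ + (η''(ρ/d)/d²) ∇ρ ⊗ ∇ρ`. Where `δ ≥ d/(2c₃²)`, the first term is at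
  most `(c₄/d)(c₃/δ) ≤ 2c₃³c₄/d²` and the second at most `c₃²c₄/d² ≤ c₃³c₄/d²`.

The two formulas are `hasFDerivAt_comp_div` and `hasFDerivAt_fderiv_comp_div`.
-/

section

variable {E : Type*} [NormedAddCommGroup E] [NormedSpace ℝ E]

lemma hasFDerivAt_comp_div {η : ℝ → ℝ} (hη : Differentiable ℝ η) {ρ : E → ℝ} {x : E}
    (hρ : DifferentiableAt ℝ ρ x) (d : ℝ) :
    HasFDerivAt (fun y => η (ρ y / d)) ((deriv η (ρ x / d) / d) • fderiv ℝ ρ x) x := by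
  have h1 : HasFDerivAt (fun y => ρ y / d) (d⁻¹ • fderiv ℝ ρ x) x := by
    simpa only [div_eq_mul_inv] using hρ.hasFDerivAt.mul_const d⁻¹
  have h2 := (hη (ρ x / d)).hasDerivAt.comp_hasFDerivAt x h1
  rwa [smul_smul, ← div_eq_mul_inv] at h2

lemma hasFDerivAt_fderiv_comp_div {η : ℝ → ℝ} (hη : ContDiff ℝ 2 η) {ρ : E → ℝ} {x : E}
    (hρ : ContDiffAt ℝ 2 ρ x) (d : ℝ) :
    HasFDerivAt (fderiv ℝ (fun y => η (ρ y / d)))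
      ((deriv η (ρ x / d) / d) • fderiv ℝ (fderiv ℝ ρ) x +
        (d⁻¹ • (deriv (deriv η) (ρ x / d) / d) • fderiv ℝ ρ x).smulRight (fderiv ℝ ρ x)) x := by
  have hη1 : Differentiable ℝ η := hη.differentiable (by norm_num)
  have heq : fderiv ℝ (fun y => η (ρ y / d)) =ᶠ[nhds x]
      fun y => (deriv η (ρ y / d) / d) • fderiv ℝ ρ y := by
    filter_upwards [hρ.eventually (by simp)] with y hy
    exact (hasFDerivAt_comp_div hη1 (hy.differentiableAt (by norm_num)) d).fderiv
  have h1 : HasFDerivAt (fun y => deriv η (ρ y / d) / d)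
      (d⁻¹ • (deriv (deriv η) (ρ x / d) / d) • fderiv ℝ ρ x) x := by
    simpa only [div_eq_mul_inv] using
      (hasFDerivAt_comp_div hη.differentiable_deriv_two
        (hρ.differentiableAt (by norm_num)) d).mul_const d⁻¹
  have h2 : HasFDerivAt (fderiv ℝ ρ) (fderiv ℝ (fderiv ℝ ρ) x) x :=
    ((hρ.fderiv_right (m := 1) (by norm_num)).differentiableAt (by norm_num)).hasFDerivAt
  exact (h1.smul h2).congr_of_eventuallyEq heq

end


open Set Metric

noncomputable section

abbrev En (n : ℕ) := EuclideanSpace ℝ (Fin n)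

/-- **Explicit cutoff construction** (Section 3.3.1): given a regularized distance
`ρ` to `closure X` and a `C²` ramp `η`, the function `ξ = η(ρ/d)` is a `C²` cutoff
with the stated support and derivative bounds. -/
theorem cutoff_construction (n : ℕ) (hn : 1 ≤ n)
    (X : Set (En n)) (hX : X.Nonempty)
    (d c₃ c₄ : ℝ) (hd : 0 < d) (hc₃ : 1 < c₃) (hc₄ : 0 < c₄)
    (ρ : En n → ℝ) (hρcont : Continuous ρ) (hρ0 : ∀ x, 0 ≤ ρ x)
    (hρX : ∀ x ∈ closure X, ρ x = 0)
    (hρsmooth : ContDiffOn ℝ (⊤ : ℕ∞) ρ (closure X)ᶜ)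
    (hρlb : ∀ x, c₃⁻¹ * infDist x (closure X) ≤ ρ x)
    (hρub : ∀ x, ρ x ≤ c₃ * infDist x (closure X))
    (hρd1 : ∀ x, x ∉ closure X → ‖fderiv ℝ ρ x‖ ≤ c₃)
    (hρd2 : ∀ x, x ∉ closure X →
      ‖fderiv ℝ (fderiv ℝ ρ) x‖ ≤ c₃ / infDist x (closure X))
    (η : ℝ → ℝ) (hη : ContDiff ℝ 2 η)
    (hη01 : ∀ t, 0 ≤ η t ∧ η t ≤ 1)
    (hη0 : ∀ t, t ≤ 1 / (2 * c₃) → η t = 0)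
    (hη1 : ∀ t, 1 / c₃ ≤ t → η t = 1)
    (hη' : ∀ t, |deriv η t| ≤ c₄)
    (hη'' : ∀ t, |deriv (deriv η) t| ≤ c₄) :
    ContDiff ℝ 2 (fun x => η (ρ x / d)) ∧
    (∀ x, 0 ≤ η (ρ x / d) ∧ η (ρ x / d) ≤ 1) ∧
    (∀ x ∈ closure X, η (ρ x / d) = 0) ∧
    (∀ x, d ≤ infDist x (closure X) → η (ρ x / d) = 1) ∧
    (Function.support (fun x => fderiv ℝ (fun y => η (ρ y / d)) x) ⊆
      {x | d / (2 * c₃ ^ 2) ≤ infDist x (closure X) ∧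
            infDist x (closure X) ≤ d}) ∧
    (∀ x, ‖fderiv ℝ (fun y => η (ρ y / d)) x‖ ≤ c₃ * c₄ / d ∧
      ‖fderiv ℝ (fderiv ℝ (fun y => η (ρ y / d))) x‖ ≤ 3 * c₃ ^ 3 * c₄ / d ^ 2) := by
  have hc0 : 0 < c₃ := by linarith
  have hη1d : Differentiable ℝ η := hη.differentiable (by norm_num)
  have hinner : ∀ x, infDist x (closure X) < d / (2 * c₃ ^ 2) →
      (fun y => η (ρ y / d)) =ᶠ[nhds x] fun _ => 0 := by
    intro x hx
    have hlt : ρ x / d < 1 / (2 * c₃) := by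
      rw [div_lt_iff₀ hd]
      calc ρ x ≤ c₃ * infDist x (closure X) := hρub x
        _ < c₃ * (d / (2 * c₃ ^ 2)) := by gcongr
        _ = 1 / (2 * c₃) * d := by field_simp
    filter_upwards [(hρcont.div_const d).continuousAt.eventually_lt_const hlt] with y hy
    exact hη0 _ hy.le
  have houter : ∀ x, d < infDist x (closure X) →
      (fun y => η (ρ y / d)) =ᶠ[nhds x] fun _ => 1 := by
    intro x hx
    have hlt : 1 / c₃ < ρ x / d := by
      rw [lt_div_iff₀ hd]
      calc 1 / c₃ * d < c₃⁻¹ * infDist x (closure X) := by rw [one_div]; gcongr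
        _ ≤ ρ x := hρlb x
    filter_upwards [(hρcont.div_const d).continuousAt.eventually_const_lt hlt] with y hy
    exact hη1 _ hy.le
  have hoff : ∀ x, d / (2 * c₃ ^ 2) ≤ infDist x (closure X) → x ∉ closure X := by
    intro x hx hmem
    rw [infDist_zero_of_mem hmem] at hx
    exact absurd hx (not_le.mpr (by positivity))
  have hρ2 : ∀ x, x ∉ closure X → ContDiffAt ℝ 2 ρ x := fun x hx =>
    ((hρsmooth x hx).contDiffAt (isClosed_closure.isOpen_compl.mem_nhds hx)).of_le
      (WithTop.coe_le_coe.2 (le_top : (2 : ℕ∞) ≤ ⊤))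
  refine ⟨?_, fun x => hη01 _, ?_, ?_, ?_, ?_⟩
  · rw [contDiff_iff_contDiffAt]
    intro x
    rcases lt_or_ge (infDist x (closure X)) (d / (2 * c₃ ^ 2)) with hx | hx
    · exact contDiffAt_const.congr_of_eventuallyEq (hinner x hx)
    · exact hη.contDiffAt.comp x ((hρ2 x (hoff x hx)).div_const d)
  · intro x hx
    rw [hρX x hx, zero_div]
    exact hη0 _ (by positivity)
  · intro x hx
    refine hη1 _ ?_
    rw [le_div_iff₀ hd]
    calc 1 / c₃ * d ≤ c₃⁻¹ * infDist x (closure X) := by rw [one_div]; gcongr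
      _ ≤ ρ x := hρlb x
  · intro x hx
    rw [Function.mem_support] at hx
    refine ⟨?_, ?_⟩ <;> by_contra! h
    · exact hx (by rw [(hinner x h).fderiv_eq, fderiv_fun_const]; rfl)
    · exact hx (by rw [(houter x h).fderiv_eq, fderiv_fun_const]; rfl)
  · intro x
    rcases lt_or_ge (infDist x (closure X)) (d / (2 * c₃ ^ 2)) with hx | hx
    · have h := hinner x hx
      have h1 : fderiv ℝ (fun y => η (ρ y / d)) x = 0 := by
        rw [h.fderiv_eq, fderiv_fun_const]; rfl
      have h2 : fderiv ℝ (fderiv ℝ (fun y => η (ρ y / d))) x = 0 := by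
        rw [h.fderiv.fderiv_eq, fderiv_fun_const, fderiv_zero]; rfl
      rw [h1, h2, norm_zero, ContinuousLinearMap.opNorm_zero]
      constructor <;> positivity
    have hxX := hoff x hx
    have hg := hρd1 x hxX
    have hd1 : ‖deriv η (ρ x / d) / d‖ ≤ c₄ / d := by
      rw [norm_div, Real.norm_of_nonneg hd.le]
      gcongr
      exact hη' _
    have hd2 : ‖deriv (deriv η) (ρ x / d) / d‖ ≤ c₄ / d := by
      rw [norm_div, Real.norm_of_nonneg hd.le]
      gcongr
      exact hη'' _
    constructor
    · rw [(hasFDerivAt_comp_div hη1d ((hρ2 x hxX).differentiableAt (by norm_num)) d).fderiv,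
        norm_smul]
      calc _ ≤ c₄ / d * c₃ := by gcongr
        _ = c₃ * c₄ / d := by ring
    · rw [(hasFDerivAt_fderiv_comp_div hη (hρ2 x hxX) d).fderiv]
      have hH : ‖fderiv ℝ (fderiv ℝ ρ) x‖ ≤ c₃ / (d / (2 * c₃ ^ 2)) :=
        (hρd2 x hxX).trans (by gcongr)
      refine (ContinuousLinearMap.opNorm_add_le _ _).trans ?_
      rw [ContinuousLinearMap.norm_smulRight_apply, norm_smul, norm_smul, norm_smul, norm_inv,
        Real.norm_of_nonneg hd.le]
      calc _ ≤ c₄ / d * (c₃ / (d / (2 * c₃ ^ 2))) + d⁻¹ * (c₄ / d * c₃) * c₃ := by gcongr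
        _ = (2 * c₃ ^ 3 + c₃ ^ 2) * c₄ / d ^ 2 := by field_simp
        _ ≤ (2 * c₃ ^ 3 + c₃ ^ 3) * c₄ / d ^ 2 := by
          gcongr
          · exact hc₃.le
          · norm_num
        _ = 3 * c₃ ^ 3 * c₄ / d ^ 2 := by ring
end
end

section
/- Let n ≥ 1, let a : ℝⁿ → symmetric positive semidefinite n×n matrices be C¹, let b : ℝⁿ → ℝⁿ be C¹ and c : ℝⁿ → ℝ continuous with div b(x) − c(x) ≥ 0 for all x, and let φ ∈ C²(ℝⁿ). Define L v := div(a ∇v) + ⟨b, ∇v⟩ + c v and A := sup_{x ∈ ℝⁿ} ( div(a ∇φ)(x) + ⟨a(x) ∇φ(x), ∇φ(x)⟩ − ⟨b(x), ∇φ(x)⟩ )_+, assumed finite. Then for every nonnegative w ∈ C²(ℝⁿ) with compact support, ∫_{ℝⁿ} e^{φ(x)} · L(e^{−φ} w)(x) dx ≤ A · ∫_{ℝⁿ} w(x) dx. -/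
/-!
The inequality holds because the integrand is a divergence plus a term with a sign.
Write `P = a∇φ` and `Q = a∇w`. Expanding `L(e^{-φ} w)` and using the symmetry of `a` in the form
`⟨∇φ, Q⟩ = ⟨∇w, P⟩` gives the pointwise identity
`e^φ L(e^{-φ} w) = div (Q - 2 w P + w b) + w (div P + ⟨P, ∇φ⟩ - ⟨b, ∇φ⟩ - (div b - c))`
(`conjugated_operator_identity`). The vector field `Q - 2 w P + w b` is `C¹` with compact support,
so its divergence integrates to zero (`integral_dvg_eq_zero`), and the last factor is at most `A`
since `div b - c ≥ 0`. Hence the integral is at most `A ∫ w`.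
-/


open Set Real

noncomputable section

/-- Partial derivative of `f : ℝⁿ → ℝ` in the `i`-th coordinate direction. -/
def pd (n : ℕ) (i : Fin n) (f : En n → ℝ) (x : En n) : ℝ :=
  fderiv ℝ f x (EuclideanSpace.single i 1)

/-- Divergence of a vector field `F : ℝⁿ → ℝⁿ`. -/
def dvg (n : ℕ) (F : En n → Fin n → ℝ) (x : En n) : ℝ :=
  ∑ i, pd n i (fun y => F y i) x

/-- `L v = div(a∇v) + ⟨b,∇v⟩ + cv`. -/
def Lop (n : ℕ) (a : En n → Fin n → Fin n → ℝ) (b : En n → Fin n → ℝ)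
    (c : En n → ℝ) (f : En n → ℝ) (x : En n) : ℝ :=
  dvg n (fun y j => ∑ i, a y j i * pd n i f y) x
    + (∑ i, b x i * pd n i f x) + c x * f x

open MeasureTheory

section Calculus

variable {n : ℕ} {f g : En n → ℝ} {x : En n}

theorem pd_mul' (i : Fin n) (hf : DifferentiableAt ℝ f x) (hg : DifferentiableAt ℝ g x) :
    pd n i (fun y => f y * g y) x = f x * pd n i g x + g x * pd n i f x := by
  simp [pd, fderiv_fun_mul hf hg]

theorem pd_add' (i : Fin n) (hf : DifferentiableAt ℝ f x) (hg : DifferentiableAt ℝ g x) :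
    pd n i (fun y => f y + g y) x = pd n i f x + pd n i g x := by
  simp [pd, fderiv_fun_add hf hg]

theorem pd_sub' (i : Fin n) (hf : DifferentiableAt ℝ f x) (hg : DifferentiableAt ℝ g x) :
    pd n i (fun y => f y - g y) x = pd n i f x - pd n i g x := by
  simp [pd, fderiv_fun_sub hf hg]

theorem pd_const_mul' (i : Fin n) (r : ℝ) (hf : DifferentiableAt ℝ f x) :
    pd n i (fun y => r * f y) x = r * pd n i f x := by
  simp [pd, fderiv_const_mul hf]

theorem pd_exp_neg (i : Fin n) (hf : DifferentiableAt ℝ f x) :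
    pd n i (fun y => Real.exp (-f y)) x = -(Real.exp (-f x) * pd n i f x) := by
  have h := (hf.hasFDerivAt.neg).exp
  have h' : fderiv ℝ (fun y => Real.exp (-f y)) x = _ := h.fderiv
  simp [pd, h']

theorem contDiff_pd (i : Fin n) (hf : ContDiff ℝ 2 f) : ContDiff ℝ 1 (pd n i f) :=
  (hf.fderiv_right (m := 1) (by norm_num)).clm_apply contDiff_const

theorem continuous_pd (i : Fin n) (hf : ContDiff ℝ 1 f) : Continuous (pd n i f) :=
  (hf.continuous_fderiv (by norm_num)).clm_apply continuous_const

theorem HasCompactSupport.pd' (i : Fin n) (hf : HasCompactSupport f) :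
    HasCompactSupport (pd n i f) :=
  hf.fderiv_apply ℝ _

theorem integrable_pd (i : Fin n) (hf : ContDiff ℝ 1 f) (hc : HasCompactSupport f) :
    Integrable (pd n i f) :=
  (continuous_pd i hf).integrable_of_hasCompactSupport (hc.pd' i)

/-- Integration by parts against the constant function `1`. -/
theorem integral_pd_eq_zero (i : Fin n) (hf : ContDiff ℝ 1 f) (hc : HasCompactSupport f) :
    ∫ x, pd n i f x = 0 := by
  have h := integral_mul_fderiv_eq_neg_fderiv_mul_of_integrable (μ := (volume : Measure (En n)))
    (𝕜 := ℝ) (f := fun _ : En n => (1 : ℝ)) (g := f) (v := EuclideanSpace.single i 1)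
    (by simp) (by simpa [pd] using! integrable_pd i hf hc)
    (by simpa using hf.continuous.integrable_of_hasCompactSupport hc)
    (by fun_prop) (fun x _ => hf.differentiable (by norm_num) x)
  simpa [pd] using h

theorem integrable_dvg {F : En n → Fin n → ℝ} (hF : ∀ j, ContDiff ℝ 1 fun x => F x j)
    (hc : ∀ j, HasCompactSupport fun x => F x j) : Integrable (dvg n F) :=
  integrable_finsetSum _ fun j _ => integrable_pd j (hF j) (hc j)

theorem integral_dvg_eq_zero {F : En n → Fin n → ℝ} (hF : ∀ j, ContDiff ℝ 1 fun x => F x j)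
    (hc : ∀ j, HasCompactSupport fun x => F x j) : ∫ x, dvg n F x = 0 := by
  unfold dvg
  rw [integral_finsetSum _ fun j _ => integrable_pd j (hF j) (hc j)]
  exact Finset.sum_eq_zero fun j _ => integral_pd_eq_zero j (hF j) (hc j)

theorem contDiff_flux {a : En n → Fin n → Fin n → ℝ} (ha : ContDiff ℝ 1 fun x => a x)
    (hf : ContDiff ℝ 2 f) (j : Fin n) :
    ContDiff ℝ 1 fun y => ∑ i, a y j i * pd n i f y :=
  ContDiff.sum fun i _ => (contDiff_pi.1 (contDiff_pi.1 ha j) i).mul (contDiff_pd i hf)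

end Calculus

/-- The conjugated operator `e^φ L(e^{-φ} ·)` in divergence form, up to a zeroth-order term. -/
theorem conjugated_operator_identity {n : ℕ}
    {a : En n → Fin n → Fin n → ℝ} {b : En n → Fin n → ℝ} (c : En n → ℝ)
    (ha : ContDiff ℝ 1 fun x => a x) (hsymm : ∀ x i j, a x i j = a x j i)
    (hb : ContDiff ℝ 1 fun x => b x)
    {φ : En n → ℝ} (hφ : ContDiff ℝ 2 φ) {w : En n → ℝ} (hw : ContDiff ℝ 2 w) (x : En n) :
    Real.exp (φ x) * Lop n a b c (fun y => Real.exp (-φ y) * w y) x =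
      dvg n (fun y j => (∑ i, a y j i * pd n i w y)
          - 2 * (w y * ∑ i, a y j i * pd n i φ y) + w y * b y j) x
        + w x * (dvg n (fun y j => ∑ i, a y j i * pd n i φ y) x
          + (∑ i, (∑ j, a x i j * pd n j φ x) * pd n i φ x)
          - (∑ i, b x i * pd n i φ x) - (dvg n (fun y => b y) x - c x)) := by
  have dφ : Differentiable ℝ φ := hφ.differentiable (by norm_num)
  have dw : Differentiable ℝ w := hw.differentiable (by norm_num)
  have db : ∀ j, Differentiable ℝ fun y => b y j := fun j =>
    (contDiff_pi.1 hb j).differentiable (by norm_num)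
  have hv : ∀ i y, pd n i (fun y => Real.exp (-φ y) * w y) y =
      Real.exp (-φ y) * (pd n i w y - w y * pd n i φ y) := by
    intro i y
    rw [pd_mul' i (by fun_prop) (by fun_prop), pd_exp_neg i (dφ y)]
    ring
  have hflux : ∀ y j, ∑ i, a y j i * pd n i (fun y => Real.exp (-φ y) * w y) y =
      Real.exp (-φ y) * ((∑ i, a y j i * pd n i w y) - w y * ∑ i, a y j i * pd n i φ y) := by
    intro y j
    rw [Finset.mul_sum, ← Finset.sum_sub_distrib, Finset.mul_sum]
    refine Finset.sum_congr rfl fun i _ => ?_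
    rw [hv]
    ring
  have hswap : ∑ j, pd n j φ x * ∑ i, a x j i * pd n i w x =
      ∑ j, pd n j w x * ∑ i, a x j i * pd n i φ x := by
    simp_rw [Finset.mul_sum]
    rw [Finset.sum_comm]
    refine Finset.sum_congr rfl fun i _ => Finset.sum_congr rfl fun j _ => ?_
    rw [hsymm x j i]
    ring
  simp only [Lop, dvg, hflux]
  simp only [hv]
  have dP : ∀ j, Differentiable ℝ fun y => ∑ i, a y j i * pd n i φ y := fun j =>
    (contDiff_flux ha hφ j).differentiable (by norm_num)
  have dQ : ∀ j, Differentiable ℝ fun y => ∑ i, a y j i * pd n i w y := fun j =>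
    (contDiff_flux ha hw j).differentiable (by norm_num)
  generalize hP : (fun (y : En n) (j : Fin n) => ∑ i, a y j i * pd n i φ y) = P
  generalize hQ : (fun (y : En n) (j : Fin n) => ∑ i, a y j i * pd n i w y) = Q
  have hP' : ∀ y j, ∑ i, a y j i * pd n i φ y = P y j := fun y j => by rw [← hP]
  have hQ' : ∀ y j, ∑ i, a y j i * pd n i w y = Q y j := fun y j => by rw [← hQ]
  simp only [hP', hQ'] at dP dQ hswap ⊢
  have h1 : ∀ j, pd n j (fun y => Real.exp (-φ y) * (Q y j - w y * P y j)) x =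
      Real.exp (-φ x) * (pd n j (fun y => Q y j) x - w x * pd n j (fun y => P y j) x
        - P x j * pd n j w x - pd n j φ x * Q x j + w x * (P x j * pd n j φ x)) := by
    intro j
    have := dP j
    have := dQ j
    rw [pd_mul' j (by fun_prop) (by fun_prop), pd_exp_neg j (dφ x),
      pd_sub' j (by fun_prop) (by fun_prop), pd_mul' j (by fun_prop) (by fun_prop)]
    ring
  have h2 : ∀ j, pd n j (fun y => Q y j - 2 * (w y * P y j) + w y * b y j) x =
      pd n j (fun y => Q y j) x - 2 * (w x * pd n j (fun y => P y j) x + P x j * pd n j w x)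
        + (w x * pd n j (fun y => b y j) x + b x j * pd n j w x) := by
    intro j
    have := dP j
    have := dQ j
    have := db j
    rw [pd_add' j (by fun_prop) (by fun_prop), pd_sub' j (by fun_prop) (by fun_prop),
      pd_const_mul' j 2 (by fun_prop), pd_mul' j (by fun_prop) (by fun_prop),
      pd_mul' j (by fun_prop) (by fun_prop)]
  have h3 : ∀ j, b x j * (Real.exp (-φ x) * (pd n j w x - w x * pd n j φ x)) =
      Real.exp (-φ x) * (b x j * pd n j w x - w x * (b x j * pd n j φ x)) := fun j => by ring
  have hexp : Real.exp (φ x) * Real.exp (-φ x) = 1 := by rw [← Real.exp_add]; simp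
  simp only [h1, h2, h3, ← Finset.mul_sum, Finset.sum_add_distrib, Finset.sum_sub_distrib]
  have hswap' : ∑ j, pd n j φ x * Q x j = ∑ j, P x j * pd n j w x := by
    rw [hswap]
    exact Finset.sum_congr rfl fun j _ => mul_comm _ _
  rw [hswap', ← mul_assoc (c x), mul_comm (c x), mul_assoc, ← mul_add, ← mul_add, ← mul_assoc,
    hexp]
  ring

/-- **Key integral inequality** (Step 2 of Proposition 3.1, autonomous form):
for `a ≥ 0` symmetric, `div b − c ≥ 0`, and any upper bound `A ≥ 0` for
`(div(a∇φ) + ⟨a∇φ,∇φ⟩ − ⟨b,∇φ⟩)₊`, every nonnegative compactly supported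
`C²` function `w` satisfies `∫ e^φ L(e^{−φ}w) ≤ A ∫ w`. -/
theorem key_integral_inequality (n : ℕ) (hn : 1 ≤ n)
    (a : En n → Fin n → Fin n → ℝ) (b : En n → Fin n → ℝ) (c : En n → ℝ)
    (ha : ContDiff ℝ 1 fun x => a x)
    (hsymm : ∀ x i j, a x i j = a x j i)
    (hpsd : ∀ x (v : Fin n → ℝ), 0 ≤ ∑ i, ∑ j, v i * a x i j * v j)
    (hb : ContDiff ℝ 1 fun x => b x) (hc : Continuous c)
    (hdiv : ∀ x, 0 ≤ dvg n (fun y => b y) x - c x)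
    (φ : En n → ℝ) (hφ : ContDiff ℝ 2 φ)
    (A : ℝ) (hA0 : 0 ≤ A)
    (hA : ∀ x, dvg n (fun y j => ∑ i, a y j i * pd n i φ y) x
        + (∑ i, (∑ j, a x i j * pd n j φ x) * pd n i φ x)
        - (∑ i, b x i * pd n i φ x) ≤ A)
    (w : En n → ℝ) (hw : ContDiff ℝ 2 w) (hwc : HasCompactSupport w)
    (hw0 : ∀ x, 0 ≤ w x) :
    (∫ x : En n, Real.exp (φ x) *
        Lop n a b c (fun y => Real.exp (-φ y) * w y) x) ≤
      A * ∫ x : En n, w x := by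
  have hwi : Integrable w := hw.continuous.integrable_of_hasCompactSupport hwc
  have hw1 : ContDiff ℝ 1 w := hw.of_le (by norm_num)
  have hF : ∀ j, ContDiff ℝ 1 fun y => (∑ i, a y j i * pd n i w y)
      - 2 * (w y * ∑ i, a y j i * pd n i φ y) + w y * b y j := fun j =>
    ((contDiff_flux ha hw j).sub
      (contDiff_const.mul (hw1.mul (contDiff_flux ha hφ j)))).add
      (hw1.mul (contDiff_pi.1 hb j))
  have hFc : ∀ j, HasCompactSupport fun y => (∑ i, a y j i * pd n i w y)
      - 2 * (w y * ∑ i, a y j i * pd n i φ y) + w y * b y j := by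
    intro j
    -- Outside the support of `w` both `w` and its gradient vanish.
    refine HasCompactSupport.intro hwc fun y hy => ?_
    have h0 : w y = 0 := image_eq_zero_of_notMem_tsupport hy
    have h1 : fderiv ℝ w y = 0 := fderiv_of_notMem_tsupport ℝ hy
    simp [h0, pd, h1]
  have hK : Continuous fun x => dvg n (fun y j => ∑ i, a y j i * pd n i φ y) x
        + (∑ i, (∑ j, a x i j * pd n j φ x) * pd n i φ x)
        - (∑ i, b x i * pd n i φ x) - (dvg n (fun y => b y) x - c x) := by
    have hbj : ∀ j, ContDiff ℝ 1 fun y => b y j := contDiff_pi.1 hb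
    have hpd : ∀ i, Continuous (pd n i φ) := fun i => (contDiff_pd i hφ).continuous
    refine (((?_ : Continuous _).add ?_).sub ?_).sub (Continuous.sub ?_ hc)
    · exact continuous_finsetSum _ fun j _ => continuous_pd j (contDiff_flux ha hφ j)
    · exact continuous_finsetSum _ fun j _ => (contDiff_flux ha hφ j).continuous.mul (hpd j)
    · exact continuous_finsetSum _ fun j _ => (hbj j).continuous.mul (hpd j)
    · exact continuous_finsetSum _ fun j _ => continuous_pd j (hbj j)
  have hwK := (hw.continuous.mul hK).integrable_of_hasCompactSupport (μ := volume) hwc.mul_right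
  simp only [Pi.mul_def] at hwK
  simp_rw [conjugated_operator_identity c ha hsymm hb hφ hw]
  rw [integral_add (integrable_dvg hF hFc) hwK, integral_dvg_eq_zero hF hFc, zero_add,
    ← integral_const_mul]
  refine integral_mono hwK (hwi.const_mul A) fun x => ?_
  change w x * _ ≤ A * w x
  rw [mul_comm A]
  exact mul_le_mul_of_nonneg_left (by linarith [hA x, hdiv x]) (hw0 x)
end
end
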